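/- For every integer N ≥ 2 and every convex potential W : {1,…,N} → ℝ there exists a linear potential L : {1,…,N} → ℝ (L_i = a·i + b for some a, b ∈ ℝ) such that Γ(H_W(P_N)) ≥ Γ(H_L(P_N)). -/

import Mathlib

/-- The path Schrödinger operator `H_W(P_N)`; vertex `i : Fin N` has label `i + 1`. -/
noncomputable def pathH (N : ℕ) (W : ℕ → ℝ) : Matrix (Fin N) (Fin N) ℝ :=
  Matrix.of fun i j =>
    if i = j then
      (if (i : ℕ) = 0 ∨ (i : ℕ) = N - 1 then (1 : ℝ) else 2) + W ((i : ℕ) + 1)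
    else if (i : ℕ) + 1 = (j : ℕ) ∨ (j : ℕ) + 1 = (i : ℕ) then -1 else 0

/-- `μ` is an eigenvalue of the real matrix `A`. -/
def IsEigen {n : ℕ} (A : Matrix (Fin n) (Fin n) ℝ) (μ : ℝ) : Prop :=
  ∃ v : Fin n → ℝ, v ≠ 0 ∧ A.mulVec v = μ • v

/-- `l1 < l2` are the two smallest eigenvalues of `A`. -/
def TwoSmallest {n : ℕ} (A : Matrix (Fin n) (Fin n) ℝ) (l1 l2 : ℝ) : Prop :=
  IsEigen A l1 ∧ IsEigen A l2 ∧ l1 < l2 ∧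
    ∀ μ, IsEigen A μ → l1 ≤ μ ∧ (μ ≠ l1 → l2 ≤ μ)

/-! Minimise the gap over the convex potentials with prescribed left value and bounded slopes, a
compact convex class. Let `V` be a minimiser, with positive ground state `x` and first excited state
`y`, both normalised. Because the matrix is tridiagonal, `y / x` is strictly monotone (up to the
sign of `y`): replacing it by its total variation function does not change the energy, while it
increases all differences and hence the variance. So `{(y / x) ^ 2 ≤ 1}` is an interval, and the
chord `L` of `V` over this interval satisfies `(L - V) (y ^ 2 - x ^ 2) ≤ 0` everywhere, by
convexity. But the derivative of the gap in the direction `L - V` is `∑ (L - V) (y ^ 2 - x ^ 2)`,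
which is nonnegative at a minimiser. Hence `V = L`. -/

open Matrix

section GroundPair

variable {n : Type*} [Fintype n]

/-- `x` is a normalised ground state of the real matrix `A` with energy `l₁` and `y` a normalised
first excited state with energy `l₂`, counted with multiplicity. The minimality of both energies is
encoded by the single quadratic form inequality `l₂ - (l₂ - l₁) x xᵀ ≤ A`. -/
structure IsGroundPair (A : Matrix n n ℝ) (l₁ l₂ : ℝ) (x y : n → ℝ) : Prop where
  energy_le : l₁ ≤ l₂
  ground_unit : x ⬝ᵥ x = 1
  excited_unit : y ⬝ᵥ y = 1
  orthogonal : x ⬝ᵥ y = 0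
  mulVec_ground : A *ᵥ x = l₁ • x
  mulVec_excited : A *ᵥ y = l₂ • y
  form_ge : ∀ z, l₂ * (z ⬝ᵥ z) - (l₂ - l₁) * (z ⬝ᵥ x) ^ 2 ≤ z ⬝ᵥ A *ᵥ z

theorem real_dotProduct_self_nonneg (z : n → ℝ) : 0 ≤ z ⬝ᵥ z := by
  simpa only [star_trivial] using dotProduct_self_star_nonneg z

theorem real_dotProduct_self_pos {z : n → ℝ} (hz : z ≠ 0) : 0 < z ⬝ᵥ z := by
  simpa only [star_trivial] using dotProduct_self_star_pos_iff.2 hz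

theorem ne_zero_of_dotProduct_self_eq_one {z : n → ℝ} (hz : z ⬝ᵥ z = 1) : z ≠ 0 := by
  rintro rfl
  simp at hz

theorem dotProduct_sq_le (u v : n → ℝ) : (u ⬝ᵥ v) ^ 2 ≤ (u ⬝ᵥ u) * (v ⬝ᵥ v) := by
  simpa only [dotProduct, ← sq] using Finset.sum_mul_sq_le_sq_mul_sq Finset.univ u v

theorem dotProduct_sq_add_sq_le {u v : n → ℝ} (hu : u ⬝ᵥ u = 1) (hv : v ⬝ᵥ v = 1)
    (huv : u ⬝ᵥ v = 0) (z : n → ℝ) : (u ⬝ᵥ z) ^ 2 + (v ⬝ᵥ z) ^ 2 ≤ z ⬝ᵥ z := by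
  have h := real_dotProduct_self_nonneg (z - (u ⬝ᵥ z) • u - (v ⬝ᵥ z) • v)
  simp only [sub_dotProduct, dotProduct_sub, smul_dotProduct, dotProduct_smul, smul_eq_mul,
    dotProduct_comm z, dotProduct_comm v u, hu, hv, huv] at h
  linarith

theorem dotProduct_mulVec_eigenvector {A : Matrix n n ℝ} {l : ℝ} {v : n → ℝ}
    (hv : A *ᵥ v = l • v) : v ⬝ᵥ A *ᵥ v = l * (v ⬝ᵥ v) := by
  rw [hv, dotProduct_smul, smul_eq_mul]

theorem dotProduct_eq_zero_of_eigenvalue_ne {A : Matrix n n ℝ} (hA : A.IsSymm) {l m : ℝ}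
    {u v : n → ℝ} (hu : A *ᵥ u = l • u) (hv : A *ᵥ v = m • v) (hlm : l ≠ m) : u ⬝ᵥ v = 0 := by
  have h : m * (u ⬝ᵥ v) = l * (u ⬝ᵥ v) := by
    rw [← smul_eq_mul, ← dotProduct_smul, ← hv, dotProduct_mulVec, ← mulVec_transpose, hA.eq, hu,
      smul_dotProduct, smul_eq_mul]
  exact (mul_eq_mul_right_iff.1 h).resolve_left hlm.symm

theorem dotProduct_add_diagonal_mulVec [DecidableEq n] (A : Matrix n n ℝ) (D z : n → ℝ) :
    z ⬝ᵥ (A + diagonal D) *ᵥ z = z ⬝ᵥ A *ᵥ z + ∑ i, D i * z i ^ 2 := by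
  rw [add_mulVec, dotProduct_add]
  congr 1
  exact Finset.sum_congr rfl fun i _ => by rw [mulVec_diagonal]; ring

theorem abs_sum_mul_sq_le_norm (D : n → ℝ) {z : n → ℝ} (hz : z ⬝ᵥ z = 1) :
    |∑ i, D i * z i ^ 2| ≤ ‖D‖ :=
  calc |∑ i, D i * z i ^ 2| ≤ ∑ i, |D i * z i ^ 2| := Finset.abs_sum_le_sum_abs _ _
    _ ≤ ∑ i, ‖D‖ * z i ^ 2 := Finset.sum_le_sum fun i _ => by
      rw [abs_mul, abs_of_nonneg (sq_nonneg (z i))]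
      exact mul_le_mul_of_nonneg_right (norm_le_pi_norm D i) (sq_nonneg _)
    _ = ‖D‖ := by
      rw [← Finset.mul_sum, show ∑ i, z i ^ 2 = 1 by simpa only [dotProduct, ← sq] using hz,
        mul_one]

theorem sq_sum_mul_sq_sub_sq_le (D : n → ℝ) {u v : n → ℝ} (hu : u ⬝ᵥ u = 1) (hv : v ⬝ᵥ v = 1) :
    (∑ i, D i * v i ^ 2 - ∑ i, D i * u i ^ 2) ^ 2 ≤ 4 * ‖D‖ ^ 2 * (1 - (u ⬝ᵥ v) ^ 2) := by
  have hsub : ∑ i, (v i - u i) ^ 2 = 2 - 2 * (u ⬝ᵥ v) := by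
    have : (v - u) ⬝ᵥ (v - u) = 2 - 2 * (u ⬝ᵥ v) := by
      rw [sub_dotProduct, dotProduct_sub, dotProduct_sub, hu, hv, dotProduct_comm v u]; ring
    simpa only [dotProduct, Pi.sub_apply, ← sq] using this
  have hadd : ∑ i, (v i + u i) ^ 2 = 2 + 2 * (u ⬝ᵥ v) := by
    have : (v + u) ⬝ᵥ (v + u) = 2 + 2 * (u ⬝ᵥ v) := by
      rw [add_dotProduct, dotProduct_add, dotProduct_add, hu, hv, dotProduct_comm v u]; ring
    simpa only [dotProduct, Pi.add_apply, ← sq] using this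
  have hD (i : n) : D i ^ 2 ≤ ‖D‖ ^ 2 := sq_le_sq' (abs_le.1 (norm_le_pi_norm D i)).1
    (abs_le.1 (norm_le_pi_norm D i)).2
  calc (∑ i, D i * v i ^ 2 - ∑ i, D i * u i ^ 2) ^ 2
      = (∑ i, (D i * (v i - u i)) * (v i + u i)) ^ 2 := by
        rw [← Finset.sum_sub_distrib]
        congr 1
        exact Finset.sum_congr rfl fun i _ => by ring
    _ ≤ (∑ i, (D i * (v i - u i)) ^ 2) * ∑ i, (v i + u i) ^ 2 :=
        Finset.sum_mul_sq_le_sq_mul_sq _ _ _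
    _ ≤ (∑ i, ‖D‖ ^ 2 * (v i - u i) ^ 2) * ∑ i, (v i + u i) ^ 2 := by
        gcongr with i
        rw [mul_pow]
        exact mul_le_mul_of_nonneg_right (hD i) (sq_nonneg _)
    _ = 4 * ‖D‖ ^ 2 * (1 - (u ⬝ᵥ v) ^ 2) := by
        rw [← Finset.mul_sum, hsub, hadd]; ring

theorem exists_isGroundPair [Nontrivial n] {A : Matrix n n ℝ} (hA : A.IsSymm) :
    ∃ l₁ l₂ x y, IsGroundPair A l₁ l₂ x y := by
  classical
  have hA' : A.IsHermitian := by rw [IsHermitian, conjTranspose_eq_transpose_of_trivial, hA.eq]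
  let e (k : n) : n → ℝ := (hA'.eigenvectorBasis k).ofLp
  let μ : n → ℝ := hA'.eigenvalues
  have he (k : n) : A *ᵥ e k = μ k • e k := hA'.mulVec_eigenvectorBasis k
  have horth (k l : n) : e k ⬝ᵥ e l = if l = k then 1 else 0 := by
    simpa only [EuclideanSpace.inner_eq_star_dotProduct, star_trivial] using
      orthonormal_iff_ite.1 hA'.eigenvectorBasis.orthonormal l k
  have parseval (z w : n → ℝ) : z ⬝ᵥ w = ∑ k, (z ⬝ᵥ e k) * (w ⬝ᵥ e k) := by
    have := hA'.eigenvectorBasis.sum_inner_mul_inner (WithLp.toLp 2 z) (WithLp.toLp 2 w)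
    simp only [EuclideanSpace.inner_eq_star_dotProduct, star_trivial] at this
    rw [dotProduct_comm z w, ← this]
    exact Finset.sum_congr rfl fun k _ => by rw [dotProduct_comm z]
  have hform (z : n → ℝ) : z ⬝ᵥ A *ᵥ z = ∑ k, μ k * (z ⬝ᵥ e k) ^ 2 := by
    rw [parseval]
    refine Finset.sum_congr rfl fun k _ => ?_
    rw [← vecMul_transpose, hA.eq, ← dotProduct_mulVec, he, dotProduct_smul, smul_eq_mul]
    ring
  obtain ⟨i, hi⟩ := Finite.exists_min μ
  obtain ⟨j₀, hj₀⟩ := exists_ne i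
  obtain ⟨j, hj, hjmin⟩ := Finset.exists_min_image (Finset.univ.erase i) μ ⟨j₀, by simpa using hj₀⟩
  have hji : j ≠ i := Finset.ne_of_mem_erase hj
  refine ⟨μ i, μ j, e i, e j, hi j, by simp [horth], by simp [horth], by simp [horth, hji],
    he i, he j, fun z => ?_⟩
  have htail : ∑ k ∈ Finset.univ.erase i, μ j * (z ⬝ᵥ e k) ^ 2 ≤
      ∑ k ∈ Finset.univ.erase i, μ k * (z ⬝ᵥ e k) ^ 2 :=
    Finset.sum_le_sum fun k hk => mul_le_mul_of_nonneg_right (hjmin k hk) (sq_nonneg _)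
  rw [hform, parseval z z, Finset.mul_sum]
  simp only [← sq]
  rw [← Finset.add_sum_erase _ _ (Finset.mem_univ i),
    ← Finset.add_sum_erase _ (fun k => μ k * _) (Finset.mem_univ i)]
  linarith

namespace IsGroundPair

variable {A : Matrix n n ℝ} {l₁ l₂ : ℝ} {x y : n → ℝ}

theorem neg_ground (h : IsGroundPair A l₁ l₂ x y) : IsGroundPair A l₁ l₂ (-x) y where
  __ := h
  ground_unit := by simpa using h.ground_unit
  orthogonal := by simpa using h.orthogonal
  mulVec_ground := by rw [mulVec_neg, h.mulVec_ground, smul_neg]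
  form_ge := by simpa using h.form_ge

theorem neg_excited (h : IsGroundPair A l₁ l₂ x y) : IsGroundPair A l₁ l₂ x (-y) where
  __ := h
  excited_unit := by simpa using h.excited_unit
  orthogonal := by simpa using h.orthogonal
  mulVec_excited := by rw [mulVec_neg, h.mulVec_excited, smul_neg]

theorem ground_form_eq (h : IsGroundPair A l₁ l₂ x y) : x ⬝ᵥ A *ᵥ x = l₁ := by
  rw [dotProduct_mulVec_eigenvector h.mulVec_ground, h.ground_unit, mul_one]

theorem excited_form_eq (h : IsGroundPair A l₁ l₂ x y) : y ⬝ᵥ A *ᵥ y = l₂ := by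
  rw [dotProduct_mulVec_eigenvector h.mulVec_excited, h.excited_unit, mul_one]

theorem rayleigh (h : IsGroundPair A l₁ l₂ x y) (z : n → ℝ) :
    l₁ * (z ⬝ᵥ z) ≤ z ⬝ᵥ A *ᵥ z := by
  have hcs : (z ⬝ᵥ x) ^ 2 ≤ z ⬝ᵥ z := by simpa [h.ground_unit] using dotProduct_sq_le z x
  linarith [h.form_ge z, mul_le_mul_of_nonneg_left hcs (sub_nonneg.2 h.energy_le)]

theorem ky_fan (h : IsGroundPair A l₁ l₂ x y) {u v : n → ℝ} (hu : u ⬝ᵥ u = 1)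
    (hv : v ⬝ᵥ v = 1) (huv : u ⬝ᵥ v = 0) : l₁ + l₂ ≤ u ⬝ᵥ A *ᵥ u + v ⬝ᵥ A *ᵥ v := by
  have bessel : (u ⬝ᵥ x) ^ 2 + (v ⬝ᵥ x) ^ 2 ≤ 1 :=
    h.ground_unit ▸ dotProduct_sq_add_sq_le hu hv huv x
  have hu' := h.form_ge u
  have hv' := h.form_ge v
  rw [hu] at hu'
  rw [hv] at hv'
  linarith [mul_le_mul_of_nonneg_left bessel (sub_nonneg.2 h.energy_le)]

theorem eq_or_eq_neg_of_form_le (h : IsGroundPair A l₁ l₂ x y) (hlt : l₁ < l₂) {u : n → ℝ}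
    (hu : u ⬝ᵥ u = 1) (hform : u ⬝ᵥ A *ᵥ u ≤ l₁) : u = x ∨ u = -x := by
  have hsq : (u ⬝ᵥ x) ^ 2 = 1 := by
    refine le_antisymm (by simpa [hu, h.ground_unit] using dotProduct_sq_le u x) ?_
    have := h.form_ge u
    rw [hu] at this
    nlinarith
  rw [← sub_eq_zero, ← add_eq_zero_iff_eq_neg, ← dotProduct_self_eq_zero,
    ← dotProduct_self_eq_zero (v := u + x)]
  simp only [sub_dotProduct, dotProduct_sub, add_dotProduct, dotProduct_add, hu, h.ground_unit,
    dotProduct_comm x u]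
  rcases mul_self_eq_one_iff.1 (sq (u ⬝ᵥ x) ▸ hsq) with h1 | h1
  · left; linarith
  · right; linarith

section Perturbation

variable [DecidableEq n] {D : n → ℝ} {m₁ m₂ : ℝ} {u v : n → ℝ}

-- The gap is `(l₁ + l₂) - 2 l₁`; `l₁ + l₂` is bounded above by the trial pair `(x, y)`, while
-- `l₁` is bounded below by testing the unperturbed form on `u`.
theorem gap_add_diagonal_le (h : IsGroundPair A l₁ l₂ x y)
    (h' : IsGroundPair (A + diagonal D) m₁ m₂ u v) :
    m₂ - m₁ ≤ l₂ - l₁ +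
      (∑ i, D i * x i ^ 2 + ∑ i, D i * y i ^ 2 - 2 * ∑ i, D i * u i ^ 2) := by
  have hsum := h'.ky_fan h.ground_unit h.excited_unit h.orthogonal
  have hground := h.rayleigh u
  have hu := h'.ground_form_eq
  rw [dotProduct_add_diagonal_mulVec] at hu
  rw [dotProduct_add_diagonal_mulVec, dotProduct_add_diagonal_mulVec, h.ground_form_eq,
    h.excited_form_eq] at hsum
  rw [h'.ground_unit] at hground
  linarith

theorem gap_mul_one_sub_sq_le (h : IsGroundPair A l₁ l₂ x y)
    (h' : IsGroundPair (A + diagonal D) m₁ m₂ u v) :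
    (l₂ - l₁) * (1 - (u ⬝ᵥ x) ^ 2) ≤ ∑ i, D i * x i ^ 2 - ∑ i, D i * u i ^ 2 := by
  have htrial := h'.rayleigh x
  have hform := h.form_ge u
  have hu := h'.ground_form_eq
  rw [dotProduct_add_diagonal_mulVec] at hu
  rw [dotProduct_add_diagonal_mulVec, h.ground_form_eq, h.ground_unit] at htrial
  rw [h'.ground_unit] at hform
  linarith

theorem gap_add_diagonal_le_add_norm (h : IsGroundPair A l₁ l₂ x y)
    (h' : IsGroundPair (A + diagonal D) m₁ m₂ u v) : m₂ - m₁ ≤ l₂ - l₁ + 4 * ‖D‖ := by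
  have hx := (abs_le.1 (abs_sum_mul_sq_le_norm D h.ground_unit)).2
  have hy := (abs_le.1 (abs_sum_mul_sq_le_norm D h.excited_unit)).2
  have hu := (abs_le.1 (abs_sum_mul_sq_le_norm D h'.ground_unit)).1
  linarith [h.gap_add_diagonal_le h']

theorem gap_mul_sum_sub_sum_le (h : IsGroundPair A l₁ l₂ x y)
    (h' : IsGroundPair (A + diagonal D) m₁ m₂ u v) :
    (l₂ - l₁) * (∑ i, D i * x i ^ 2 - ∑ i, D i * u i ^ 2) ≤ 4 * ‖D‖ ^ 2 := by
  set E := ∑ i, D i * x i ^ 2 - ∑ i, D i * u i ^ 2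
  have hγ : 0 ≤ l₂ - l₁ := sub_nonneg.2 h.energy_le
  have hsq : (l₂ - l₁) * E ^ 2 ≤ 4 * ‖D‖ ^ 2 * E :=
    calc (l₂ - l₁) * E ^ 2 ≤ (l₂ - l₁) * (4 * ‖D‖ ^ 2 * (1 - (u ⬝ᵥ x) ^ 2)) :=
          mul_le_mul_of_nonneg_left (sq_sum_mul_sq_sub_sq_le D h'.ground_unit h.ground_unit) hγ
      _ = 4 * ‖D‖ ^ 2 * ((l₂ - l₁) * (1 - (u ⬝ᵥ x) ^ 2)) := by ring
      _ ≤ 4 * ‖D‖ ^ 2 * E := mul_le_mul_of_nonneg_left (h.gap_mul_one_sub_sq_le h') (by positivity)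
  rcases le_or_gt E 0 with hneg | hpos
  · exact (mul_nonpos_of_nonneg_of_nonpos hγ hneg).trans (by positivity)
  · exact le_of_mul_le_mul_right (by linarith) hpos

theorem sum_mul_sq_ground_le_sum_mul_sq_excited [Nontrivial n] (hA : A.IsSymm)
    (h : IsGroundPair A l₁ l₂ x y) (hlt : l₁ < l₂)
    (hmin : ∀ t : ℝ, 0 < t → t ≤ 1 → ∀ m₁ m₂ u v,
      IsGroundPair (A + diagonal (t • D)) m₁ m₂ u v → l₂ - l₁ ≤ m₂ - m₁) :
    ∑ i, D i * x i ^ 2 ≤ ∑ i, D i * y i ^ 2 := by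
  have hsmul (t : ℝ) (z : n → ℝ) : ∑ i, (t • D) i * z i ^ 2 = t * ∑ i, D i * z i ^ 2 := by
    simp only [Pi.smul_apply, smul_eq_mul, mul_assoc, Finset.mul_sum]
  have hbound (t : ℝ) (ht : 0 < t) (ht1 : t ≤ 1) :
      (l₂ - l₁) * (∑ i, D i * x i ^ 2 - ∑ i, D i * y i ^ 2) ≤ t * (8 * ‖D‖ ^ 2) := by
    obtain ⟨m₁, m₂, u, v, h'⟩ := exists_isGroundPair (hA.add (isSymm_diagonal (t • D)))
    have hle := (hmin t ht ht1 m₁ m₂ u v h').trans (h.gap_add_diagonal_le h')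
    have hstab := h.gap_mul_sum_sub_sum_le h'
    simp only [hsmul, norm_smul, Real.norm_of_nonneg ht.le] at hle hstab
    have hle' : 0 ≤ ∑ i, D i * x i ^ 2 + ∑ i, D i * y i ^ 2 - 2 * ∑ i, D i * u i ^ 2 :=
      nonneg_of_mul_nonneg_right (by linarith) ht
    have hstab' : (l₂ - l₁) * (∑ i, D i * x i ^ 2 - ∑ i, D i * u i ^ 2) ≤ t * (4 * ‖D‖ ^ 2) :=
      le_of_mul_le_mul_left (by linarith) ht
    linarith [mul_nonneg (sub_nonneg.2 hlt.le) hle']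
  have hlim := (tendsto_one_div_add_atTop_nhds_zero_nat (𝕜 := ℝ)).mul_const (8 * ‖D‖ ^ 2)
  rw [zero_mul] at hlim
  have hnonpos := ge_of_tendsto' hlim fun k : ℕ =>
    hbound (1 / (k + 1)) (by positivity) (by rw [div_le_one₀] <;> linarith [k.cast_nonneg (α := ℝ)])
  exact sub_nonpos.1 (nonpos_of_mul_nonpos_right hnonpos (sub_pos.2 hlt))

end Perturbation

end IsGroundPair

end GroundPair

section WeightedEnergy

variable {n : Type*} [Fintype n]

/-- The energy `∑ᵢⱼ cᵢⱼ (fᵢ - fⱼ)²` of a function on a weighted graph; every edge is counted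
twice. -/
def weightedEnergy (c : n → n → ℝ) (f : n → ℝ) : ℝ :=
  ∑ i, ∑ j, c i j * (f i - f j) ^ 2

theorem weightedEnergy_mono {c : n → n → ℝ} (hc : ∀ i j, 0 ≤ c i j) {f g : n → ℝ}
    (hfg : ∀ i j, |f i - f j| ≤ |g i - g j|) : weightedEnergy c f ≤ weightedEnergy c g :=
  Finset.sum_le_sum fun i _ => Finset.sum_le_sum fun j _ =>
    mul_le_mul_of_nonneg_left (sq_le_sq.2 (hfg i j)) (hc i j)

theorem abs_sub_eq_of_weightedEnergy_eq {c : n → n → ℝ} (hc : ∀ i j, 0 < c i j) {f g : n → ℝ}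
    (hfg : ∀ i j, |f i - f j| ≤ |g i - g j|) (h : weightedEnergy c f = weightedEnergy c g)
    (i j : n) : |f i - f j| = |g i - g j| := by
  have hle (i j : n) : c i j * (f i - f j) ^ 2 ≤ c i j * (g i - g j) ^ 2 :=
    mul_le_mul_of_nonneg_left (sq_le_sq.2 (hfg i j)) (hc i j).le
  have hrow := (Finset.sum_eq_sum_iff_of_le fun i _ => Finset.sum_le_sum fun j _ => hle i j).1 h i
    (Finset.mem_univ i)
  have hentry := (Finset.sum_eq_sum_iff_of_le fun j _ => hle i j).1 hrow j (Finset.mem_univ j)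
  exact sq_eq_sq_iff_abs_eq_abs _ _ |>.1 (mul_left_cancel₀ (hc i j).ne' hentry)

theorem two_mul_form_sub_eq_weightedEnergy {A : Matrix n n ℝ} (hA : A.IsSymm) {l : ℝ}
    {x : n → ℝ} (hx : A *ᵥ x = l • x) (f : n → ℝ) :
    2 * ((x * f) ⬝ᵥ A *ᵥ (x * f) - l * ((x * f) ⬝ᵥ (x * f))) =
      weightedEnergy (fun i j => -(A i j * (x i * x j))) f := by
  have hrow (i : n) : ∑ j, A i j * x j = l * x i := congrFun hx i
  have hdiag : ∑ i, ∑ j, A i j * (x i * x j) * f i ^ 2 = l * ((x * f) ⬝ᵥ (x * f)) := by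
    rw [dotProduct, Finset.mul_sum]
    refine Finset.sum_congr rfl fun i _ => ?_
    calc ∑ j, A i j * (x i * x j) * f i ^ 2 = x i * f i ^ 2 * ∑ j, A i j * x j := by
          rw [Finset.mul_sum]
          exact Finset.sum_congr rfl fun j _ => by ring
      _ = l * ((x * f) i * (x * f) i) := by rw [hrow, Pi.mul_apply]; ring
  have hdiag' : ∑ i, ∑ j, A i j * (x i * x j) * f j ^ 2 = l * ((x * f) ⬝ᵥ (x * f)) := by
    rw [Finset.sum_comm, ← hdiag]
    exact Finset.sum_congr rfl fun i _ => Finset.sum_congr rfl fun j _ => by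
      rw [hA.apply]; ring
  have hcross : (x * f) ⬝ᵥ A *ᵥ (x * f) = ∑ i, ∑ j, A i j * (x i * x j) * (f i * f j) := by
    simp only [dotProduct, mulVec, Finset.mul_sum, Pi.mul_apply]
    exact Finset.sum_congr rfl fun i _ => Finset.sum_congr rfl fun j _ => by ring
  calc 2 * ((x * f) ⬝ᵥ A *ᵥ (x * f) - l * ((x * f) ⬝ᵥ (x * f)))
      = 2 * ∑ i, ∑ j, A i j * (x i * x j) * (f i * f j) -
          ∑ i, ∑ j, A i j * (x i * x j) * f i ^ 2 -
          ∑ i, ∑ j, A i j * (x i * x j) * f j ^ 2 := by rw [hcross, hdiag, hdiag']; ring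
    _ = weightedEnergy (fun i j => -(A i j * (x i * x j))) f := by
      simp only [weightedEnergy, Finset.mul_sum, ← Finset.sum_sub_distrib]
      exact Finset.sum_congr rfl fun i _ => Finset.sum_congr rfl fun j _ => by ring

theorem two_mul_variance_eq_weightedEnergy {x : n → ℝ} (hx : x ⬝ᵥ x = 1) (f : n → ℝ) :
    2 * ((x * f) ⬝ᵥ (x * f) - ((x * f) ⬝ᵥ x) ^ 2) =
      weightedEnergy (fun i j => (x i * x j) ^ 2) f := by
  calc 2 * ((x * f) ⬝ᵥ (x * f) - ((x * f) ⬝ᵥ x) ^ 2)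
      = ((x * f) ⬝ᵥ (x * f)) * (x ⬝ᵥ x) + (x ⬝ᵥ x) * ((x * f) ⬝ᵥ (x * f)) -
          2 * (((x * f) ⬝ᵥ x) * ((x * f) ⬝ᵥ x)) := by rw [hx]; ring
    _ = weightedEnergy (fun i j => (x i * x j) ^ 2) f := by
      simp only [weightedEnergy, dotProduct, Finset.sum_mul_sum, Pi.mul_apply]
      simp only [Finset.mul_sum, ← Finset.sum_add_distrib, ← Finset.sum_sub_distrib]
      exact Finset.sum_congr rfl fun i _ => Finset.sum_congr rfl fun j _ => by ring

namespace IsGroundPair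

variable {A : Matrix n n ℝ} {l₁ l₂ : ℝ} {x y : n → ℝ}

theorem poincare (hA : A.IsSymm) (h : IsGroundPair A l₁ l₂ x y) (f : n → ℝ) :
    (l₂ - l₁) * weightedEnergy (fun i j => (x i * x j) ^ 2) f ≤
      weightedEnergy (fun i j => -(A i j * (x i * x j))) f := by
  rw [← two_mul_form_sub_eq_weightedEnergy hA h.mulVec_ground,
    ← two_mul_variance_eq_weightedEnergy h.ground_unit]
  linarith [h.form_ge (x * f)]

theorem poincare_eq (hA : A.IsSymm) (h : IsGroundPair A l₁ l₂ x y) (hx : ∀ i, 0 < x i) :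
    (l₂ - l₁) * weightedEnergy (fun i j => (x i * x j) ^ 2) (y / x) =
      weightedEnergy (fun i j => -(A i j * (x i * x j))) (y / x) := by
  have hxy : x * (y / x) = y := funext fun i => mul_div_cancel₀ (y i) (hx i).ne'
  rw [← two_mul_form_sub_eq_weightedEnergy hA h.mulVec_ground,
    ← two_mul_variance_eq_weightedEnergy h.ground_unit, hxy, h.excited_form_eq, h.excited_unit,
    dotProduct_comm, h.orthogonal]
  ring

theorem sum_mul_ratio_sub (h : IsGroundPair A l₁ l₂ x y) (hx : ∀ i, 0 < x i) (i : n) :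
    ∑ j, A i j * (x j * ((y / x) j - (y / x) i)) = (l₂ - l₁) * y i := by
  have hxy (j : n) : x j * (y / x) j = y j := mul_div_cancel₀ (y j) (hx j).ne'
  calc ∑ j, A i j * (x j * ((y / x) j - (y / x) i))
      = (A *ᵥ y) i - (y / x) i * (A *ᵥ x) i := by
        simp only [mulVec, dotProduct, Finset.mul_sum, ← Finset.sum_sub_distrib, mul_sub, hxy]
        exact Finset.sum_congr rfl fun j _ => by ring
    _ = l₂ * y i - l₁ * (x i * (y / x) i) := by
        rw [h.mulVec_excited, h.mulVec_ground, Pi.smul_apply, Pi.smul_apply, smul_eq_mul,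
          smul_eq_mul]
        ring
    _ = (l₂ - l₁) * y i := by rw [hxy]; ring

end IsGroundPair

end WeightedEnergy

section TotalVariation

variable {n : ℕ}

theorem exists_total_variation (f : Fin (n + 1) → ℝ) : ∃ F : Fin (n + 1) → ℝ,
    Monotone (F - f) ∧ Monotone (F + f) ∧
      ∀ k : Fin n, F k.succ - F k.castSucc = |f k.succ - f k.castSucc| := by
  have hstep (k : Fin n) : Fin.partialSum (fun k => |f k.succ - f k.castSucc|) k.succ -
      Fin.partialSum (fun k => |f k.succ - f k.castSucc|) k.castSucc =
        |f k.succ - f k.castSucc| := by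
    rw [Fin.partialSum_succ, add_sub_cancel_left]
  refine ⟨Fin.partialSum fun k => |f k.succ - f k.castSucc|, Fin.monotone_iff_le_succ.2 fun k => ?_,
    Fin.monotone_iff_le_succ.2 fun k => ?_, hstep⟩
  · simp only [Pi.sub_apply]
    linarith [hstep k, le_abs_self (f k.succ - f k.castSucc)]
  · simp only [Pi.add_apply]
    linarith [hstep k, neg_le_abs (f k.succ - f k.castSucc)]

theorem abs_sub_le_abs_sub_of_monotone {ι : Type*} [LinearOrder ι] {f F : ι → ℝ}
    (hsub : Monotone (F - f)) (hadd : Monotone (F + f)) (i j : ι) :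
    |f i - f j| ≤ |F i - F j| := by
  wlog hij : i ≤ j generalizing i j
  · simpa only [abs_sub_comm] using this j i (le_of_not_ge hij)
  have h₁ := hsub hij
  have h₂ := hadd hij
  simp only [Pi.sub_apply, Pi.add_apply] at h₁ h₂
  rw [abs_sub_comm, abs_sub_comm (F i)]
  exact (abs_le.2 ⟨by linarith, by linarith⟩).trans (le_abs_self _)

theorem monotone_or_antitone_of_abs_sub_eq {ι : Type*} [Preorder ι] [BoundedOrder ι] {f F : ι → ℝ}
    (hsub : Monotone (F - f)) (hadd : Monotone (F + f)) (h : |f ⊤ - f ⊥| = |F ⊤ - F ⊥|) :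
    Monotone f ∨ Antitone f := by
  have hconst {g : ι → ℝ} (hg : Monotone g) (hends : g ⊤ = g ⊥) (i j : ι) : g i = g j :=
    ((hg le_top).trans (hends.le.trans (hg bot_le))).antisymm
      ((hg le_top).trans (hends.le.trans (hg bot_le)))
  rcases abs_eq_abs.1 h with h | h
  · refine Or.inl fun i j hij => ?_
    have heq := hconst hsub (by simp only [Pi.sub_apply]; linarith) i j
    have hle := hadd hij
    simp only [Pi.sub_apply, Pi.add_apply] at heq hle
    linarith
  · refine Or.inr fun i j hij => ?_
    have heq := hconst hadd (by simp only [Pi.add_apply]; linarith) i j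
    have hle := hsub hij
    simp only [Pi.sub_apply, Pi.add_apply] at heq hle
    linarith

end TotalVariation

section Jacobi

/-- Jacobi matrices, normalised to have negative off-diagonal entries: real symmetric tridiagonal
matrices such as the path Schrödinger operators. -/
structure IsJacobi {n : ℕ} (A : Matrix (Fin n) (Fin n) ℝ) : Prop where
  isSymm : A.IsSymm
  superdiagonal_neg {i j : Fin n} : (i : ℕ) + 1 = j → A i j < 0
  eq_zero_above {i j : Fin n} : (i : ℕ) + 1 < j → A i j = 0

namespace IsJacobi

variable {n : ℕ}

theorem apply_nonpos {A : Matrix (Fin n) (Fin n) ℝ} (hA : IsJacobi A) {i j : Fin n}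
    (hij : i ≠ j) : A i j ≤ 0 := by
  wlog hlt : i < j generalizing i j
  · simpa only [hA.isSymm.apply] using this hij.symm (hij.lt_or_gt.resolve_left hlt)
  rcases (Nat.succ_le_of_lt (Fin.lt_def.1 hlt)).eq_or_lt with h | h
  · exact (hA.superdiagonal_neg h).le
  · exact (hA.eq_zero_above h).le

theorem apply_castSucc_succ_neg {A : Matrix (Fin (n + 1)) (Fin (n + 1)) ℝ} (hA : IsJacobi A)
    (k : Fin n) : A k.castSucc k.succ < 0 :=
  hA.superdiagonal_neg (by simp)

theorem apply_succ_castSucc_neg {A : Matrix (Fin (n + 1)) (Fin (n + 1)) ℝ} (hA : IsJacobi A)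
    (k : Fin n) : A k.succ k.castSucc < 0 :=
  hA.isSymm.apply k.castSucc k.succ ▸ hA.apply_castSucc_succ_neg k

theorem apply_castSucc_eq_zero {A : Matrix (Fin (n + 1)) (Fin (n + 1)) ℝ} (hA : IsJacobi A)
    {k : Fin n} {j : Fin (n + 1)} (hj : k.succ < j) : A k.castSucc j = 0 :=
  hA.eq_zero_above hj

theorem apply_succ_eq_zero {A : Matrix (Fin (n + 1)) (Fin (n + 1)) ℝ} (hA : IsJacobi A)
    {k : Fin n} {j : Fin (n + 1)} (hj : j < k.castSucc) : A k.succ j = 0 := by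
  rw [← hA.isSymm.apply]
  exact hA.eq_zero_above (Nat.succ_lt_succ hj)

theorem add_diagonal {A : Matrix (Fin n) (Fin n) ℝ} (hA : IsJacobi A) (D : Fin n → ℝ) :
    IsJacobi (A + diagonal D) where
  isSymm := hA.isSymm.add (isSymm_diagonal D)
  superdiagonal_neg {i j} hij := by
    simpa [diagonal_apply_ne D (show i ≠ j by omega)] using hA.superdiagonal_neg hij
  eq_zero_above {i j} hij := by
    simpa [diagonal_apply_ne D (show i ≠ j by omega)] using hA.eq_zero_above hij

theorem eigenvector_eq_zero {A : Matrix (Fin (n + 1)) (Fin (n + 1)) ℝ} (hA : IsJacobi A)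
    {l : ℝ} {v : Fin (n + 1) → ℝ} (hv : A *ᵥ v = l • v) (h0 : v 0 = 0) : v = 0 := by
  suffices h : ∀ k, ∀ j ≤ k, v j = 0 from funext fun k => h k k le_rfl
  intro k
  induction k using Fin.induction with
  | zero => exact fun j hj => (Fin.le_zero_iff.1 hj) ▸ h0
  | succ k ih =>
    have hrow : A k.castSucc k.succ * v k.succ = 0 :=
      calc A k.castSucc k.succ * v k.succ = ∑ j, A k.castSucc j * v j := by
            symm
            refine Fintype.sum_eq_single k.succ fun j hj => ?_
            rcases le_or_gt j k.castSucc with hle | hgt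
            · rw [ih j hle, mul_zero]
            · rw [hA.apply_castSucc_eq_zero ((Fin.castSucc_lt_iff_succ_le.1 hgt).lt_of_ne' hj),
                zero_mul]
        _ = l * v k.castSucc := congrFun hv k.castSucc
        _ = 0 := by rw [ih _ le_rfl, mul_zero]
    intro j hj
    rcases hj.eq_or_lt with rfl | hlt
    · exact (mul_eq_zero.1 hrow).resolve_left (hA.apply_castSucc_succ_neg k).ne
    · exact ih j (Fin.le_castSucc_iff.2 hlt)

theorem eigenvector_pos {A : Matrix (Fin (n + 1)) (Fin (n + 1)) ℝ} (hA : IsJacobi A)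
    {l : ℝ} {v : Fin (n + 1) → ℝ} (hv : A *ᵥ v = l • v) (hne : v ≠ 0) (hnonneg : ∀ i, 0 ≤ v i)
    (i : Fin (n + 1)) : 0 < v i := by
  refine (hnonneg i).lt_of_ne' fun hi => hne (hA.eigenvector_eq_zero hv ?_)
  induction i using Fin.induction with
  | zero => exact hi
  | succ k ih =>
    refine ih ?_
    have hterm (j : Fin (n + 1)) : A k.succ j * v j ≤ 0 := by
      rcases eq_or_ne k.succ j with rfl | hj
      · rw [hi, mul_zero]
      · exact mul_nonpos_of_nonpos_of_nonneg (hA.apply_nonpos hj) (hnonneg j)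
    have hsum : ∑ j, A k.succ j * v j = 0 := by
      simpa only [mulVec, dotProduct, Pi.smul_apply, hi, smul_zero] using congrFun hv k.succ
    have := (Finset.sum_eq_zero_iff_of_nonpos fun j _ => hterm j).1 hsum k.castSucc
      (Finset.mem_univ _)
    exact (mul_eq_zero.1 this).resolve_left (hA.apply_succ_castSucc_neg k).ne

theorem energy_lt {A : Matrix (Fin (n + 1)) (Fin (n + 1)) ℝ} (hA : IsJacobi A) {l₁ l₂ : ℝ}
    {x y : Fin (n + 1) → ℝ} (h : IsGroundPair A l₁ l₂ x y) : l₁ < l₂ := by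
  refine h.energy_le.lt_of_ne fun heq => ?_
  have hx0 : x 0 ≠ 0 := fun h0 =>
    ne_zero_of_dotProduct_self_eq_one h.ground_unit (hA.eigenvector_eq_zero h.mulVec_ground h0)
  have hcomb : y 0 • x - x 0 • y = 0 := by
    refine hA.eigenvector_eq_zero (l := l₁) ?_ (by simp [mul_comm])
    rw [mulVec_sub, mulVec_smul, mulVec_smul, h.mulVec_ground, h.mulVec_excited, ← heq, smul_sub,
      smul_comm l₁, smul_comm l₁]
  have := congrArg (· ⬝ᵥ y) hcomb
  simp only [sub_dotProduct, smul_dotProduct, h.orthogonal, h.excited_unit, smul_eq_mul,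
    zero_dotProduct] at this
  exact hx0 (by linarith)

theorem abs_form_le {A : Matrix (Fin n) (Fin n) ℝ} (hA : IsJacobi A) (x : Fin n → ℝ) :
    |x| ⬝ᵥ A *ᵥ |x| ≤ x ⬝ᵥ A *ᵥ x := by
  simp only [dotProduct, mulVec, Finset.mul_sum, Pi.abs_apply]
  refine Finset.sum_le_sum fun i _ => Finset.sum_le_sum fun j _ => ?_
  rw [mul_left_comm, mul_left_comm (x i), ← abs_mul]
  rcases eq_or_ne i j with rfl | hij
  · rw [abs_mul_self]
  · exact mul_le_mul_of_nonpos_left (le_abs_self _) (hA.apply_nonpos hij)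

theorem exists_pos_isGroundPair {A : Matrix (Fin (n + 2)) (Fin (n + 2)) ℝ} (hA : IsJacobi A) :
    ∃ l₁ l₂ x y, IsGroundPair A l₁ l₂ x y ∧ ∀ i, 0 < x i := by
  obtain ⟨l₁, l₂, x, y, h⟩ := exists_isGroundPair hA.isSymm
  have habs_unit : |x| ⬝ᵥ |x| = 1 := by
    simpa only [dotProduct, Pi.abs_apply, abs_mul_abs_self] using h.ground_unit
  have hpair : IsGroundPair A l₁ l₂ |x| y := by
    rcases h.eq_or_eq_neg_of_form_le (hA.energy_lt h) habs_unit
      ((hA.abs_form_le x).trans h.ground_form_eq.le) with habs | habs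
    · rwa [habs]
    · exact habs ▸ h.neg_ground
  exact ⟨l₁, l₂, |x|, y, hpair, hA.eigenvector_pos hpair.mulVec_ground
    (ne_zero_of_dotProduct_self_eq_one habs_unit) fun i => abs_nonneg (x i)⟩

theorem weightedEnergy_congr {A : Matrix (Fin (n + 1)) (Fin (n + 1)) ℝ} (hA : IsJacobi A)
    (x : Fin (n + 1) → ℝ) {f g : Fin (n + 1) → ℝ}
    (hfg : ∀ k : Fin n, |f k.succ - f k.castSucc| = |g k.succ - g k.castSucc|) :
    weightedEnergy (fun i j => -(A i j * (x i * x j))) f =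
      weightedEnergy (fun i j => -(A i j * (x i * x j))) g := by
  suffices hterm : ∀ i j, -(A i j * (x i * x j)) * (f i - f j) ^ 2 =
      -(A i j * (x i * x j)) * (g i - g j) ^ 2 from
    Finset.sum_congr rfl fun i _ => Finset.sum_congr rfl fun j _ => hterm i j
  intro i j
  wlog hij : i ≤ j generalizing i j
  · have := this j i (le_of_not_ge hij)
    rwa [hA.isSymm.apply, mul_comm (x j), ← sub_sq_comm (f i), ← sub_sq_comm (g i)] at this
  rcases lt_trichotomy ((i : ℕ) + 1) j with hlt | heq | hgt
  · rw [hA.eq_zero_above hlt]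
    ring
  · obtain ⟨k, rfl⟩ := Fin.exists_succ_eq.2 (show j ≠ 0 by rintro rfl; simp at heq)
    obtain rfl : i = k.castSucc := Fin.ext (by simpa using heq)
    rw [← sq_abs, abs_sub_comm, hfg, abs_sub_comm, sq_abs]
  · obtain rfl : i = j := Fin.ext (by have := Fin.le_def.1 hij; omega)
    ring

theorem ratio_monotone_or_antitone {A : Matrix (Fin (n + 1)) (Fin (n + 1)) ℝ} (hA : IsJacobi A)
    {l₁ l₂ : ℝ} {x y : Fin (n + 1) → ℝ} (h : IsGroundPair A l₁ l₂ x y) (hx : ∀ i, 0 < x i) :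
    Monotone (y / x) ∨ Antitone (y / x) := by
  obtain ⟨F, hsub, hadd, hstep⟩ := exists_total_variation (y / x)
  have habs := abs_sub_le_abs_sub_of_monotone hsub hadd
  have hc (i j : Fin (n + 1)) : 0 < (x i * x j) ^ 2 := pow_pos (mul_pos (hx i) (hx j)) 2
  have henergy := hA.weightedEnergy_congr x (f := y / x) (g := F) fun k => by rw [hstep, abs_abs]
  have hle : (l₂ - l₁) * weightedEnergy (fun i j => (x i * x j) ^ 2) F ≤
      (l₂ - l₁) * weightedEnergy (fun i j => (x i * x j) ^ 2) (y / x) := by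
    rw [h.poincare_eq hA.isSymm hx, henergy]
    exact h.poincare hA.isSymm F
  have hvar := le_of_mul_le_mul_left hle (sub_pos.2 (hA.energy_lt h))
  exact monotone_or_antitone_of_abs_sub_eq hsub hadd (abs_sub_eq_of_weightedEnergy_eq hc habs
    ((weightedEnergy_mono (fun i j => (hc i j).le) habs).antisymm hvar) _ _)

theorem row_term_nonneg {A : Matrix (Fin (n + 1)) (Fin (n + 1)) ℝ} (hA : IsJacobi A)
    {x f : Fin (n + 1) → ℝ} (hx : ∀ i, 0 < x i) (hf : Monotone f) {k : Fin n}
    (hk : f k.castSucc = f k.succ) (j : Fin (n + 1)) :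
    0 ≤ A k.castSucc j * (x j * (f j - f k.castSucc)) := by
  rcases lt_trichotomy j k.castSucc with hlt | rfl | hgt
  · exact mul_nonneg_of_nonpos_of_nonpos (hA.apply_nonpos hlt.ne')
      (mul_nonpos_of_nonneg_of_nonpos (hx j).le (sub_nonpos.2 (hf hlt.le)))
  · simp
  · rcases (Fin.castSucc_lt_iff_succ_le.1 hgt).eq_or_lt with rfl | hlt
    · simp [hk]
    · rw [hA.apply_castSucc_eq_zero hlt, zero_mul]

theorem row_term_nonpos {A : Matrix (Fin (n + 1)) (Fin (n + 1)) ℝ} (hA : IsJacobi A)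
    {x f : Fin (n + 1) → ℝ} (hx : ∀ i, 0 < x i) (hf : Monotone f) {k : Fin n}
    (hk : f k.castSucc = f k.succ) (j : Fin (n + 1)) :
    A k.succ j * (x j * (f j - f k.succ)) ≤ 0 := by
  rcases lt_trichotomy j k.succ with hlt | rfl | hgt
  · rcases (Fin.le_castSucc_iff.2 hlt).eq_or_lt with rfl | hlt
    · simp [hk]
    · rw [hA.apply_succ_eq_zero hlt, zero_mul]
  · simp
  · exact mul_nonpos_of_nonpos_of_nonneg (hA.apply_nonpos hgt.ne)
      (mul_nonneg (hx j).le (sub_nonneg.2 (hf hgt.le)))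

theorem excited_eq_zero_of_ratio_eq {A : Matrix (Fin (n + 1)) (Fin (n + 1)) ℝ} (hA : IsJacobi A)
    {l₁ l₂ : ℝ} {x y : Fin (n + 1) → ℝ} (h : IsGroundPair A l₁ l₂ x y) (hx : ∀ i, 0 < x i)
    (hmono : Monotone (y / x)) {k : Fin n} (hk : (y / x) k.castSucc = (y / x) k.succ) :
    y k.castSucc = 0 := by
  have hγ := sub_pos.2 (hA.energy_lt h)
  have hnonneg : 0 ≤ y k.castSucc := nonneg_of_mul_nonneg_right
    (h.sum_mul_ratio_sub hx k.castSucc ▸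
      Finset.sum_nonneg fun j _ => hA.row_term_nonneg hx hmono hk j) hγ
  have hnonpos : y k.succ ≤ 0 := nonpos_of_mul_nonpos_right
    (h.sum_mul_ratio_sub hx k.succ ▸
      Finset.sum_nonpos fun j _ => hA.row_term_nonpos hx hmono hk j) hγ
  have hratio : y k.castSucc / x k.castSucc ≤ 0 :=
    hk.trans_le (div_nonpos_of_nonpos_of_nonneg hnonpos (hx _).le)
  rw [div_le_iff₀ (hx _), zero_mul] at hratio
  exact hratio.antisymm hnonneg

-- If the ratio takes equal values at two neighbours, `y` vanishes there, and the eigenvalue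
-- equation in the left-hand row propagates this to the left end, where it forces `y = 0`.
theorem ratio_strictMono {A : Matrix (Fin (n + 1)) (Fin (n + 1)) ℝ} (hA : IsJacobi A)
    {l₁ l₂ : ℝ} {x y : Fin (n + 1) → ℝ} (h : IsGroundPair A l₁ l₂ x y) (hx : ∀ i, 0 < x i)
    (hmono : Monotone (y / x)) : StrictMono (y / x) := by
  refine Fin.strictMono_iff_lt_succ.2 fun k =>
    (hmono (Fin.castSucc_le_succ k)).lt_of_ne fun hk => ?_
  suffices hleft : ∀ i (k : Fin n), k.castSucc = i →
      (y / x) k.castSucc = (y / x) k.succ → y 0 = 0 from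
    ne_zero_of_dotProduct_self_eq_one h.excited_unit
      (hA.eigenvector_eq_zero h.mulVec_excited (hleft _ k rfl hk))
  intro i
  induction i using Fin.induction with
  | zero => exact fun k h0 hk => h0 ▸ hA.excited_eq_zero_of_ratio_eq h hx hmono hk
  | succ i ih =>
    intro k hki hk
    have hsum := h.sum_mul_ratio_sub hx k.castSucc
    rw [hA.excited_eq_zero_of_ratio_eq h hx hmono hk, mul_zero] at hsum
    have hterm := (Finset.sum_eq_zero_iff_of_nonneg fun j _ =>
      hA.row_term_nonneg hx hmono hk j).1 hsum i.castSucc (Finset.mem_univ _)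
    rw [hki] at hterm
    have hsub := (mul_eq_zero.1 hterm).resolve_left (hA.apply_succ_castSucc_neg i).ne
    exact ih i rfl (sub_eq_zero.1 ((mul_eq_zero.1 hsub).resolve_left (hx _).ne'))

theorem exists_strictMono_ratio {A : Matrix (Fin (n + 2)) (Fin (n + 2)) ℝ} (hA : IsJacobi A) :
    ∃ l₁ l₂ x y, IsGroundPair A l₁ l₂ x y ∧ (∀ i, 0 < x i) ∧ StrictMono (y / x) := by
  obtain ⟨l₁, l₂, x, y, h, hx⟩ := hA.exists_pos_isGroundPair
  rcases hA.ratio_monotone_or_antitone h hx with hmono | hanti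
  · exact ⟨l₁, l₂, x, y, h, hx, hA.ratio_strictMono h hx hmono⟩
  · exact ⟨l₁, l₂, x, -y, h.neg_excited, hx,
      hA.ratio_strictMono h.neg_excited hx (by rw [neg_div]; exact hanti.neg)⟩

end IsJacobi

end Jacobi

section DiscreteConvexity

/-- Convexity of a function on the vertices `0, …, n - 1` of a path, stated as Jensen's inequality
for three vertices with the denominators cleared. -/
def IsDiscreteConvex {n : ℕ} (V : Fin n → ℝ) : Prop :=
  ∀ i j k : Fin n, i ≤ j → j ≤ k → ((k : ℝ) - i) * V j ≤ ((k : ℝ) - j) * V i + ((j : ℝ) - i) * V k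

theorem add_one_sub_le_add_one_sub {N : ℕ} {W : ℕ → ℝ}
    (hW : ∀ i, 2 ≤ i → i < N → 0 ≤ W (i - 1) - 2 * W i + W (i + 1)) {a b : ℕ} (ha : 1 ≤ a)
    (hab : a ≤ b) (hb : b < N) : W (a + 1) - W a ≤ W (b + 1) - W b := by
  induction b, hab using Nat.le_induction with
  | base => exact le_rfl
  | succ b hab ih =>
    have hsecond := hW (b + 1) (by omega) hb
    rw [Nat.add_sub_cancel] at hsecond
    linarith [ih (by omega)]

theorem add_mul_sub_le {N : ℕ} {W : ℕ → ℝ}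
    (hW : ∀ i, 2 ≤ i → i < N → 0 ≤ W (i - 1) - 2 * W i + W (i + 1)) {b d : ℕ} (hb : 1 ≤ b)
    (hbN : b < N) (hd : 1 ≤ d) (hdN : d ≤ N) :
    W b + (W (b + 1) - W b) * ((d : ℝ) - b) ≤ W d := by
  rcases le_total b d with hbd | hdb
  · have h := Finset.card_nsmul_le_sum (Finset.Ico b d) (fun k => W (k + 1) - W k) _ fun k hk =>
      add_one_sub_le_add_one_sub hW hb (Finset.mem_Ico.1 hk).1
        ((Finset.mem_Ico.1 hk).2.trans_le hdN)
    rw [Finset.sum_Ico_sub _ hbd, Nat.card_Ico, nsmul_eq_mul, Nat.cast_sub hbd] at h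
    linarith
  · have h := Finset.sum_le_card_nsmul (Finset.Ico d b) (fun k => W (k + 1) - W k) _ fun k hk =>
      add_one_sub_le_add_one_sub hW (hd.trans (Finset.mem_Ico.1 hk).1)
        (Finset.mem_Ico.1 hk).2.le hbN
    rw [Finset.sum_Ico_sub _ hdb, Nat.card_Ico, nsmul_eq_mul, Nat.cast_sub hdb] at h
    linarith

theorem isDiscreteConvex_of_second_difference_nonneg {N : ℕ} {W : ℕ → ℝ}
    (hW : ∀ i, 2 ≤ i → i < N → 0 ≤ W (i - 1) - 2 * W i + W (i + 1)) :
    IsDiscreteConvex fun i : Fin N => W (i + 1) := by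
  intro i j k hij hjk
  rcases hjk.eq_or_lt with rfl | hlt
  · simp
  have hjN : (j : ℕ) + 1 < N := by omega
  have hi := add_mul_sub_le hW (b := j + 1) (d := i + 1) (by omega) hjN (by omega) (by omega)
  have hk := add_mul_sub_le hW (b := j + 1) (d := k + 1) (by omega) hjN (by omega) (by omega)
  have hij' : (0 : ℝ) ≤ (j : ℝ) - i := sub_nonneg.2 (by exact_mod_cast hij)
  have hjk' : (0 : ℝ) ≤ (k : ℝ) - j := sub_nonneg.2 (by exact_mod_cast hjk)
  push_cast at hi hk
  linear_combination mul_le_mul_of_nonneg_left hi hjk' + mul_le_mul_of_nonneg_left hk hij'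

namespace IsDiscreteConvex

variable {n : ℕ} {V : Fin n → ℝ} {p q : Fin n} {c : ℝ}

theorem le_chord (hV : IsDiscreteConvex V) (hpq : p < q) (hc : V q = V p + c * ((q : ℝ) - p))
    {i : Fin n} (hpi : p ≤ i) (hiq : i ≤ q) : V i ≤ V p + c * ((i : ℝ) - p) := by
  have hpos : (0 : ℝ) < (q : ℝ) - p := sub_pos.2 (by exact_mod_cast hpq)
  refine le_of_mul_le_mul_left ?_ hpos
  linear_combination hV p i q hpi hiq + ((i : ℝ) - p) * hc

theorem chord_le (hV : IsDiscreteConvex V) (hpq : p < q) (hc : V q = V p + c * ((q : ℝ) - p))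
    {i : Fin n} (hi : i ≤ p ∨ q ≤ i) : V p + c * ((i : ℝ) - p) ≤ V i := by
  have hpos : (0 : ℝ) < (q : ℝ) - p := sub_pos.2 (by exact_mod_cast hpq)
  refine le_of_mul_le_mul_left ?_ hpos
  rcases hi with hip | hqi
  · linear_combination hV i p q hip hpq.le + ((p : ℝ) - i) * hc
  · linear_combination hV p q i hpq.le hqi - ((i : ℝ) - p) * hc

theorem chord_sub_mul_nonpos (hV : IsDiscreteConvex V) (hpq : p < q)
    (hc : V q = V p + c * ((q : ℝ) - p)) {g : Fin n → ℝ} (hin : ∀ i ∈ Set.Ioo p q, g i < 0)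
    (hout : ∀ i ∉ Set.Icc p q, 0 < g i) (i : Fin n) :
    (V p + c * ((i : ℝ) - p) - V i) * g i ≤ 0 := by
  by_cases hi : i ∈ Set.Icc p q
  · rcases eq_or_ne i p with rfl | hip
    · simp
    rcases eq_or_ne i q with rfl | hiq
    · simp [← hc]
    · exact mul_nonpos_of_nonneg_of_nonpos (sub_nonneg.2 (hV.le_chord hpq hc hi.1 hi.2))
        (hin i ⟨hi.1.lt_of_ne' hip, hi.2.lt_of_ne hiq⟩).le
  · have hcompl : i ≤ p ∨ q ≤ i := by
      by_contra! h
      exact hi ⟨h.1.le, h.2.le⟩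
    exact mul_nonpos_of_nonpos_of_nonneg (sub_nonpos.2 (hV.chord_le hpq hc hcompl)) (hout i hi).le

end IsDiscreteConvex

theorem eq_chord_of_sub_mul_eq_zero {n : ℕ} {V g : Fin n → ℝ} {p q : Fin n} {c : ℝ}
    (hc : V q = V p + c * ((q : ℝ) - p)) (hin : ∀ i ∈ Set.Ioo p q, g i < 0)
    (hout : ∀ i ∉ Set.Icc p q, 0 < g i) {i : Fin n}
    (h : (V p + c * ((i : ℝ) - p) - V i) * g i = 0) : V i = V p + c * ((i : ℝ) - p) := by
  rcases mul_eq_zero.1 h with h | hg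
  · exact (sub_eq_zero.1 h).symm
  have hi : i ∈ Set.Icc p q := by
    by_contra hi
    exact (hout i hi).ne' hg
  rcases eq_or_ne i p with rfl | hip
  · simp
  rcases eq_or_ne i q with rfl | hiq
  · exact hc
  · exact absurd hg (hin i ⟨hi.1.lt_of_ne' hip, hi.2.lt_of_ne hiq⟩).ne

theorem exists_lt_hull {ι : Type*} [Finite ι] [LinearOrder ι] [Nontrivial ι] {S : Set ι}
    (hS : S.Nonempty) : ∃ p q, p < q ∧ S ⊆ Set.Icc p q ∧
      ∀ i ∈ Set.Ioo p q, ∃ a ∈ S, ∃ b ∈ S, a < i ∧ i < b := by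
  obtain ⟨a, ha, hmin⟩ := Set.exists_min_image S id S.toFinite hS
  obtain ⟨b, hb, hmax⟩ := Set.exists_max_image S id S.toFinite hS
  rcases (hmin b hb).lt_or_eq with hab | hab
  · exact ⟨a, b, hab, fun i hi => ⟨hmin i hi, hmax i hi⟩, fun i hi => ⟨a, ha, b, hb, hi⟩⟩
  obtain rfl : a = b := hab
  obtain ⟨c, hc⟩ := exists_ne a
  rcases hc.lt_or_gt with hlt | hgt
  · obtain ⟨p, -, hp⟩ := exists_le_covBy_of_lt hlt
    exact ⟨p, a, hp.lt, fun i hi => ⟨hp.le.trans (hmin i hi), hmax i hi⟩,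
      fun i hi => absurd hi.2 (hp.2 hi.1)⟩
  · obtain ⟨q, hq, -⟩ := exists_covBy_le_of_lt hgt
    exact ⟨a, q, hq.lt, fun i hi => ⟨hmin i hi, (hmax i hi).trans hq.le⟩,
      fun i hi => absurd hi.2 (hq.2 hi.1)⟩

theorem sq_lt_one_of_strictMono {ι : Type*} [Preorder ι] {f : ι → ℝ} (hf : StrictMono f)
    {a i b : ι} (ha : f a ^ 2 ≤ 1) (hb : f b ^ 2 ≤ 1) (hai : a < i) (hib : i < b) :
    f i ^ 2 < 1 := by
  rw [sq_lt_one_iff_abs_lt_one, abs_lt]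
  rw [sq_le_one_iff_abs_le_one, abs_le] at ha hb
  exact ⟨ha.1.trans_lt (hf hai), (hf hib).trans_le hb.2⟩

-- The chord runs between the end points of the interval on which `f ^ 2 ≤ 1`.
theorem IsDiscreteConvex.exists_affine_sub_mul_sq_sub_one_nonpos {n : ℕ} {V f : Fin (n + 2) → ℝ}
    {M : ℝ} (hV : IsDiscreteConvex V) (hM : ∀ i j, |V i - V j| ≤ M * |(i : ℝ) - j|)
    (hf : StrictMono f) (hS : ∃ i, f i ^ 2 ≤ 1) :
    ∃ c b : ℝ, |c| ≤ M ∧ ∀ i, (c * i + b - V i) * (f i ^ 2 - 1) ≤ 0 ∧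
      ((c * i + b - V i) * (f i ^ 2 - 1) = 0 → V i = c * i + b) := by
  obtain ⟨p, q, hpq, hsub, hbetween⟩ := exists_lt_hull (S := {i | f i ^ 2 ≤ 1}) hS
  have hpos : (0 : ℝ) < (q : ℝ) - p := sub_pos.2 (by exact_mod_cast hpq)
  set c := (V q - V p) / ((q : ℝ) - p) with hcdef
  have hc : V q = V p + c * ((q : ℝ) - p) := by
    rw [div_mul_cancel₀ _ hpos.ne', add_sub_cancel]
  have hcM : |c| ≤ M := by
    rw [hcdef, abs_div, div_le_iff₀ (abs_pos.2 hpos.ne')]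
    exact hM q p
  have hin (i : Fin (n + 2)) (hi : i ∈ Set.Ioo p q) : f i ^ 2 - 1 < 0 := by
    obtain ⟨a, ha, b, hb, hai, hib⟩ := hbetween i hi
    exact sub_neg.2 (sq_lt_one_of_strictMono hf ha hb hai hib)
  have hout (i : Fin (n + 2)) (hi : i ∉ Set.Icc p q) : 0 < f i ^ 2 - 1 :=
    sub_pos.2 (not_le.1 fun h => hi (hsub h))
  have hline (i : Fin (n + 2)) : c * i + (V p - c * p) = V p + c * (i - p) := by ring
  refine ⟨c, V p - c * p, hcM, fun i => ?_⟩
  rw [hline]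
  exact ⟨hV.chord_sub_mul_nonpos hpq hc hin hout i, eq_chord_of_sub_mul_eq_zero hc hin hout⟩

end DiscreteConvexity

section SpectralGap

theorem TwoSmallest.unique {n : ℕ} {A : Matrix (Fin n) (Fin n) ℝ} {l₁ l₂ m₁ m₂ : ℝ}
    (hl : TwoSmallest A l₁ l₂) (hm : TwoSmallest A m₁ m₂) : l₁ = m₁ ∧ l₂ = m₂ := by
  obtain ⟨hl₁, hl₂, hlt, hle⟩ := hl
  obtain ⟨hm₁, hm₂, hmt, hme⟩ := hm
  obtain rfl : l₁ = m₁ := (hle m₁ hm₁).1.antisymm (hme l₁ hl₁).1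
  exact ⟨rfl, ((hle m₂ hm₂).2 hmt.ne').antisymm ((hme l₂ hl₂).2 hlt.ne')⟩

theorem IsGroundPair.twoSmallest {n : ℕ} {A : Matrix (Fin n) (Fin n) ℝ} (hA : A.IsSymm)
    {l₁ l₂ : ℝ} {x y : Fin n → ℝ} (h : IsGroundPair A l₁ l₂ x y) (hlt : l₁ < l₂) :
    TwoSmallest A l₁ l₂ := by
  refine ⟨⟨x, ne_zero_of_dotProduct_self_eq_one h.ground_unit, h.mulVec_ground⟩,
    ⟨y, ne_zero_of_dotProduct_self_eq_one h.excited_unit, h.mulVec_excited⟩, hlt, ?_⟩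
  rintro μ ⟨w, hw, hμ⟩
  have hpos := real_dotProduct_self_pos hw
  constructor
  · refine le_of_mul_le_mul_right ?_ hpos
    exact (h.rayleigh w).trans_eq (dotProduct_mulVec_eigenvector hμ)
  · intro hne
    have horth := dotProduct_eq_zero_of_eigenvalue_ne hA hμ h.mulVec_ground hne
    have hform := h.form_ge w
    rw [horth, dotProduct_mulVec_eigenvector hμ] at hform
    exact le_of_mul_le_mul_right (by linarith) hpos

theorem add_diagonal_add_diagonal {n : Type*} [DecidableEq n] (A : Matrix n n ℝ) (V D : n → ℝ) :
    A + diagonal V + diagonal D = A + diagonal (V + D) := by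
  rw [add_assoc, diagonal_add]
  rfl

/-- The fundamental gap of a real matrix, with junk value `0` if there is no pair of smallest
eigenvalues. -/
noncomputable def spectralGap {n : ℕ} (A : Matrix (Fin n) (Fin n) ℝ) : ℝ :=
  sInf {γ | ∃ l₁ l₂, TwoSmallest A l₁ l₂ ∧ γ = l₂ - l₁}

theorem TwoSmallest.spectralGap_eq {n : ℕ} {A : Matrix (Fin n) (Fin n) ℝ} {l₁ l₂ : ℝ}
    (h : TwoSmallest A l₁ l₂) : spectralGap A = l₂ - l₁ := by
  suffices hset : {γ | ∃ m₁ m₂, TwoSmallest A m₁ m₂ ∧ γ = m₂ - m₁} = {l₂ - l₁} by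
    rw [spectralGap, hset, csInf_singleton]
  refine Set.eq_singleton_iff_unique_mem.2 ⟨⟨l₁, l₂, h, rfl⟩, ?_⟩
  rintro γ ⟨m₁, m₂, hm, rfl⟩
  rw [(h.unique hm).1, (h.unique hm).2]

namespace IsJacobi

variable {n : ℕ} {J : Matrix (Fin (n + 2)) (Fin (n + 2)) ℝ}

theorem spectralGap_eq {n : ℕ} {J : Matrix (Fin (n + 1)) (Fin (n + 1)) ℝ} (hJ : IsJacobi J)
    {l₁ l₂ : ℝ} {x y : Fin (n + 1) → ℝ} (h : IsGroundPair J l₁ l₂ x y) :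
    spectralGap J = l₂ - l₁ :=
  (h.twoSmallest hJ.isSymm (hJ.energy_lt h)).spectralGap_eq

theorem spectralGap_add_diagonal_le (hJ : IsJacobi J) (D : Fin (n + 2) → ℝ) :
    spectralGap (J + diagonal D) ≤ spectralGap J + 4 * ‖D‖ := by
  obtain ⟨l₁, l₂, x, y, h⟩ := exists_isGroundPair hJ.isSymm
  obtain ⟨m₁, m₂, u, v, h'⟩ := exists_isGroundPair (hJ.add_diagonal D).isSymm
  rw [hJ.spectralGap_eq h, (hJ.add_diagonal D).spectralGap_eq h']
  exact h.gap_add_diagonal_le_add_norm h'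

theorem continuous_spectralGap (hJ : IsJacobi J) :
    Continuous fun V : Fin (n + 2) → ℝ => spectralGap (J + diagonal V) := by
  refine (LipschitzWith.of_le_add_mul 4 fun V V' => ?_).continuous
  have h := (hJ.add_diagonal V').spectralGap_add_diagonal_le (V - V')
  rwa [add_diagonal_add_diagonal, ← dist_eq_norm, add_sub_cancel] at h

end IsJacobi

end SpectralGap

section Minimisation

/-- The convex potentials on a path with prescribed value at the left end point and slopes bounded
by `M`. Fixing one value removes the constants, which do not change the gap; this makes the class
compact. -/
def convexPotentials (n : ℕ) (v₀ M : ℝ) : Set (Fin (n + 1) → ℝ) :=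
  {V | IsDiscreteConvex V ∧ V 0 = v₀ ∧ ∀ i j, |V i - V j| ≤ M * |(i : ℝ) - j|}

section ConvexPotentials

variable {n : ℕ} {v₀ M : ℝ}

theorem isCompact_convexPotentials : IsCompact (convexPotentials n v₀ M) := by
  refine Metric.isCompact_of_isClosed_isBounded ?_ ?_
  · simp only [convexPotentials, IsDiscreteConvex, Set.ofPred_and, Set.ofPred_forall]
    refine IsClosed.inter ?_ (IsClosed.inter ?_ ?_)
    · exact isClosed_iInter fun i => isClosed_iInter fun j => isClosed_iInter fun k =>
        isClosed_iInter fun _ => isClosed_iInter fun _ =>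
          isClosed_le (by fun_prop) (by fun_prop)
    · exact isClosed_eq (by fun_prop) continuous_const
    · exact isClosed_iInter fun i => isClosed_iInter fun j =>
        isClosed_le (by fun_prop) continuous_const
  · have hbox : convexPotentials n v₀ M ⊆ Set.univ.pi fun i : Fin (n + 1) =>
        Metric.closedBall v₀ (M * |(i : ℝ) - ((0 : Fin (n + 1)) : ℕ)|) := by
      rintro V ⟨-, rfl, hVM⟩ i -
      exact hVM i 0
    exact (Bornology.IsBounded.pi fun i => Metric.isBounded_closedBall).subset hbox

theorem convex_convexPotentials : Convex ℝ (convexPotentials n v₀ M) := by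
  rintro V ⟨hV, hV0, hVM⟩ L ⟨hL, hL0, hLM⟩ s t hs ht hst
  simp only [convexPotentials, Set.mem_ofPred_eq, IsDiscreteConvex, Pi.add_apply, Pi.smul_apply,
    smul_eq_mul]
  refine ⟨fun i j k hij hjk => ?_, ?_, fun i j => ?_⟩
  · linear_combination s * hV i j k hij hjk + t * hL i j k hij hjk
  · linear_combination s * hV0 + t * hL0 + v₀ * hst
  · calc |s * V i + t * L i - (s * V j + t * L j)| = |s * (V i - V j) + t * (L i - L j)| := by
          ring_nf
      _ ≤ s * |V i - V j| + t * |L i - L j| := by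
          simpa only [abs_mul, abs_of_nonneg hs, abs_of_nonneg ht] using
            abs_add_le (s * (V i - V j)) (t * (L i - L j))
      _ ≤ s * (M * |(i : ℝ) - j|) + t * (M * |(i : ℝ) - j|) :=
          add_le_add (mul_le_mul_of_nonneg_left (hVM i j) hs)
            (mul_le_mul_of_nonneg_left (hLM i j) ht)
      _ = M * |(i : ℝ) - j| := by rw [← add_mul, hst, one_mul]

theorem affine_mem_convexPotentials {c : ℝ} (hc : |c| ≤ M) :
    (fun i : Fin (n + 1) => c * (i : ℝ) + v₀) ∈ convexPotentials n v₀ M := by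
  refine ⟨fun i j k _ _ => le_of_eq (by ring), by simp, fun i j => ?_⟩
  rw [add_sub_add_right_eq_sub, ← mul_sub, abs_mul]
  exact mul_le_mul_of_nonneg_right hc (abs_nonneg _)

theorem IsDiscreteConvex.exists_mem_convexPotentials {V : Fin (n + 1) → ℝ}
    (hV : IsDiscreteConvex V) : ∃ M, V ∈ convexPotentials n (V 0) M := by
  refine ⟨2 * ‖V‖, hV, rfl, fun i j => ?_⟩
  rcases eq_or_ne i j with rfl | hij
  · simp
  have hdist : (1 : ℝ) ≤ |(i : ℝ) - j| := by
    have : (i : ℤ) - j ≠ 0 := by omega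
    exact_mod_cast Int.one_le_abs this
  calc |V i - V j| ≤ ‖V i‖ + ‖V j‖ := norm_sub_le (V i) (V j)
    _ ≤ 2 * ‖V‖ := by linarith [norm_le_pi_norm V i, norm_le_pi_norm V j]
    _ ≤ 2 * ‖V‖ * |(i : ℝ) - j| := le_mul_of_one_le_right (by positivity) hdist

end ConvexPotentials

theorem IsGroundPair.exists_ratio_sq_le_one {n : Type*} [Fintype n] {A : Matrix n n ℝ}
    {l₁ l₂ : ℝ} {x y : n → ℝ} (h : IsGroundPair A l₁ l₂ x y) (hx : ∀ i, 0 < x i) :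
    ∃ i, (y / x) i ^ 2 ≤ 1 := by
  have hne : (Finset.univ : Finset n).Nonempty := by
    by_contra hempty
    have hunit := h.ground_unit
    simp [dotProduct, Finset.not_nonempty_iff_eq_empty.1 hempty] at hunit
  obtain ⟨i, -, hi⟩ := Finset.exists_le_of_sum_le hne (h.excited_unit.trans h.ground_unit.symm).le
  refine ⟨i, ?_⟩
  rw [Pi.div_apply, div_pow, div_le_one₀ (pow_pos (hx i) 2), sq, sq]
  exact hi

namespace IsJacobi

variable {n : ℕ} {J : Matrix (Fin (n + 2)) (Fin (n + 2)) ℝ} {v₀ M : ℝ} {V : Fin (n + 2) → ℝ}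

theorem sum_mul_sq_le_of_isMinOn (hJ : IsJacobi J) (hV : V ∈ convexPotentials (n + 1) v₀ M)
    (hmin : IsMinOn (fun V => spectralGap (J + diagonal V)) (convexPotentials (n + 1) v₀ M) V)
    {l₁ l₂ : ℝ} {x y : Fin (n + 2) → ℝ} (h : IsGroundPair (J + diagonal V) l₁ l₂ x y)
    {L : Fin (n + 2) → ℝ} (hL : L ∈ convexPotentials (n + 1) v₀ M) :
    ∑ i, (L - V) i * x i ^ 2 ≤ ∑ i, (L - V) i * y i ^ 2 := by
  have hJV := hJ.add_diagonal V
  refine h.sum_mul_sq_ground_le_sum_mul_sq_excited hJV.isSymm (hJV.energy_lt h) ?_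
  intro t ht ht1 m₁ m₂ u v h'
  have hmem := convex_convexPotentials.add_smul_sub_mem hV hL ⟨ht.le, ht1⟩
  have hgap := hmin hmem
  have hJt := hJV.add_diagonal (t • (L - V))
  rw [← hJV.spectralGap_eq h, ← hJt.spectralGap_eq h', add_diagonal_add_diagonal]
  exact hgap

theorem exists_eq_affine_of_isMinOn (hJ : IsJacobi J) (hV : V ∈ convexPotentials (n + 1) v₀ M)
    (hmin : IsMinOn (fun V => spectralGap (J + diagonal V)) (convexPotentials (n + 1) v₀ M) V) :
    ∃ a b : ℝ, V = fun i : Fin (n + 2) => a * (i : ℝ) + b := by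
  obtain ⟨l₁, l₂, x, y, h, hx, hmono⟩ := (hJ.add_diagonal V).exists_strictMono_ratio
  obtain ⟨c, b, hcM, hsign⟩ := hV.1.exists_affine_sub_mul_sq_sub_one_nonpos hV.2.2 hmono
    (h.exists_ratio_sq_le_one hx)
  have hfirst := hJ.sum_mul_sq_le_of_isMinOn hV hmin h (affine_mem_convexPotentials hcM)
  have hterm (i : Fin (n + 2)) : (c * i + b - V i) * (y i ^ 2 - x i ^ 2) =
      (c * i + b - V i) * ((y / x) i ^ 2 - 1) * x i ^ 2 := by
    have := (hx i).ne'
    rw [Pi.div_apply]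
    field_simp
  have hnonpos (i : Fin (n + 2)) : (c * i + b - V i) * (y i ^ 2 - x i ^ 2) ≤ 0 :=
    hterm i ▸ mul_nonpos_of_nonpos_of_nonneg (hsign i).1 (sq_nonneg _)
  have hshift : ∑ i, (c * i + b - V i) * (y i ^ 2 - x i ^ 2) =
      (∑ i, (c * i + v₀ - V i) * y i ^ 2 - ∑ i, (c * i + v₀ - V i) * x i ^ 2) +
        (b - v₀) * (y ⬝ᵥ y - x ⬝ᵥ x) := by
    simp only [dotProduct, Finset.mul_sum, ← Finset.sum_sub_distrib, ← Finset.sum_add_distrib]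
    exact Finset.sum_congr rfl fun i _ => by ring
  have hsum : ∑ i, (c * i + b - V i) * (y i ^ 2 - x i ^ 2) = 0 := by
    refine (Finset.sum_nonpos fun i _ => hnonpos i).antisymm ?_
    rw [hshift, h.excited_unit, h.ground_unit, sub_self, mul_zero, add_zero]
    exact sub_nonneg.2 hfirst
  refine ⟨c, b, funext fun i => (hsign i).2 ?_⟩
  have hi := (Finset.sum_eq_zero_iff_of_nonpos fun i _ => hnonpos i).1 hsum i (Finset.mem_univ i)
  rw [hterm] at hi
  exact (mul_eq_zero.1 hi).resolve_right (pow_pos (hx i) 2).ne'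

theorem exists_affine_spectralGap_le (hJ : IsJacobi J) (hV : IsDiscreteConvex V) :
    ∃ a b : ℝ, spectralGap (J + diagonal fun i : Fin (n + 2) => a * (i : ℝ) + b) ≤
      spectralGap (J + diagonal V) := by
  obtain ⟨M, hVM⟩ := hV.exists_mem_convexPotentials
  obtain ⟨V', hV', hmin⟩ := isCompact_convexPotentials.exists_isMinOn ⟨V, hVM⟩
    hJ.continuous_spectralGap.continuousOn
  obtain ⟨a, b, rfl⟩ := hJ.exists_eq_affine_of_isMinOn hV' hmin
  exact ⟨a, b, hmin hVM⟩

end IsJacobi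

end Minimisation

theorem pathH_eq_add_diagonal (N : ℕ) (W : ℕ → ℝ) :
    pathH N W = pathH N 0 + diagonal fun i : Fin N => W (i + 1) := by
  ext i j
  rcases eq_or_ne i j with rfl | hij
  · simp [pathH]
  · simp [pathH, hij]

theorem isJacobi_pathH (N : ℕ) (W : ℕ → ℝ) : IsJacobi (pathH N W) where
  isSymm := IsSymm.ext fun i j => by
    rcases eq_or_ne i j with rfl | hij
    · rfl
    · simp only [pathH, of_apply, if_neg hij, if_neg hij.symm, or_comm]
  superdiagonal_neg {i j} hij := by
    simp [pathH, show i ≠ j by omega, hij]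
  eq_zero_above {i j} hij := by
    simp [pathH, show i ≠ j by omega, hij.ne, show (j : ℕ) + 1 ≠ i by omega]

theorem path_convex_ge_linear_general {N : ℕ} (hN : 2 ≤ N) {J : Matrix (Fin N) (Fin N) ℝ}
    (hJ : IsJacobi J) {W : ℕ → ℝ}
    (hW : ∀ i : ℕ, 2 ≤ i → i < N → 0 ≤ W (i - 1) - 2 * W i + W (i + 1))
    {l1 l2 : ℝ} (h : TwoSmallest (J + diagonal fun i : Fin N => W (i + 1)) l1 l2) :
    ∃ a b : ℝ, ∀ m1 m2 : ℝ,
      TwoSmallest (J + diagonal fun i : Fin N => a * ((i + 1 : ℕ) : ℝ) + b) m1 m2 →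
      l2 - l1 ≥ m2 - m1 := by
  obtain ⟨n, rfl⟩ := Nat.exists_eq_add_of_le' hN
  obtain ⟨a, b, hab⟩ :=
    hJ.exists_affine_spectralGap_le (isDiscreteConvex_of_second_difference_nonneg hW)
  have hline : (fun i : Fin (n + 2) => a * ((i + 1 : ℕ) : ℝ) + (b - a)) =
      fun i : Fin (n + 2) => a * (i : ℝ) + b := by
    funext i
    push_cast
    ring
  refine ⟨a, b - a, fun m1 m2 hm => ?_⟩
  rw [hline] at hm
  rwa [h.spectralGap_eq, hm.spectralGap_eq] at hab

/-- for every convex potential `W` on `{1,…,N}` there is a linear potential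
`L i = a * i + b` with `Γ(H_W(P_N)) ≥ Γ(H_L(P_N))`. -/
theorem path_convex_ge_linear (N : ℕ) (hN : 2 ≤ N) (W : ℕ → ℝ)
    (hW : ∀ i : ℕ, 2 ≤ i → i < N → 0 ≤ W (i - 1) - 2 * W i + W (i + 1))
    (l1 l2 : ℝ) (h : TwoSmallest (pathH N W) l1 l2) :
    ∃ a b : ℝ, ∀ m1 m2 : ℝ,
      TwoSmallest (pathH N (fun i => a * (i : ℝ) + b)) m1 m2 →
      l2 - l1 ≥ m2 - m1 := by
  rw [pathH_eq_add_diagonal] at h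
  obtain ⟨a, b, hab⟩ := path_convex_ge_linear_general hN (isJacobi_pathH N 0) hW h
  refine ⟨a, b, fun m1 m2 hm => hab m1 m2 ?_⟩
  rwa [pathH_eq_add_diagonal] at hm
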